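/- arXiv:1806.03158 — 10 statements merged into one kernel-verified Lean document; each statement's English description precedes it below -/
import Mathlib

section
/- Let q and p be odd primes and let n be a unit of ℤ/qℤ whose multiplicative order is p. Let ζ ∈ ℂ be a primitive q-th root of unity, and let t, t′ be integers with t ≢ 0 (mod p) and t′ ≢ 0 (mod p). If Σ_{m=0}^{p−1} ζ^{((n^t − n^{−t})·(n^m − n^{−m})).val} = Σ_{m=0}^{p−1} ζ^{((n^{t′} − n^{−t′})·(n^m − n^{−m})).val}, then t ≡ t′ (mod p) or t ≡ −t′ (mod p). -/
/-!
Write `a m = n ^ m - n ^ (-m)` in `ZMod q`. The hypothesis says that an integer polynomial `P`, the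
difference of `∑ m, X ^ (a t * a m).val` and `∑ m, X ^ (a t' * a m).val`, vanishes at `ζ`, so it is
divisible by the cyclotomic polynomial `Φ_q`. Modulo `q` one has `Φ_q = (X - 1) ^ (q - 1)`, so `P`
vanishes to order at least `3` at `1` modulo `q` (here `q > 3`, as the odd prime `p` divides
`q - 1`). Applying `(X d/dX) ^ 2` and evaluating at `1` turns `X ^ x.val` into `x ^ 2`, whence
`a t ^ 2 * S = a t' ^ 2 * S` with `S = ∑ m, a m ^ 2` (`sum_sq_eq_of_sum_pow_val_eq`).

Since `n ^ 2` is a nontrivial `p`-th root of unity, `S = -2 p ≠ 0` (`sum_sq_zpow_sub_zpow_neg`).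
Hence `a t = ± a t'`, that is `a t = a t'` or `a t = a (-t')`. Finally `a` is injective modulo `p`:
`a s - a t = (n ^ s - n ^ t) * (1 + n ^ (-s - t))`, and `-1` is not a power of an element of odd
order (`modEq_of_zpow_sub_zpow_neg_eq`).
-/

open Polynomial in
/-- An equality of two sums of `q`-th roots of unity forces the second power sums of the exponents
to agree modulo `q`: it holds modulo `Φ_q`, which is `(X - 1) ^ (q - 1)` over `ZMod q`. -/
lemma sum_sq_eq_of_sum_pow_val_eq {q : ℕ} (hq : q.Prime) (hq3 : 3 < q) {ζ : ℂ}
    (hζ : IsPrimitiveRoot ζ q) {ι : Type*} (s : Finset ι) (f g : ι → ZMod q)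
    (h : ∑ i ∈ s, ζ ^ (f i).val = ∑ i ∈ s, ζ ^ (g i).val) :
    ∑ i ∈ s, f i ^ 2 = ∑ i ∈ s, g i ^ 2 := by
  have := Fact.mk hq
  have hdvd : cyclotomic q ℤ ∣ ∑ i ∈ s, (X : ℤ[X]) ^ (f i).val - ∑ i ∈ s, X ^ (g i).val := by
    rw [cyclotomic_eq_minpoly hζ hq.pos]
    apply minpoly.isIntegrallyClosed_dvd (hζ.isIntegral hq.pos)
    simp [h]
  have hdvd' := map_dvd (mapRingHom (Int.castRingHom (ZMod q))) hdvd
  have hcyc : cyclotomic q (ZMod q) = (X - 1) ^ (q - 1) := by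
    simpa using cyclotomic_mul_prime_eq_pow_of_not_dvd (ZMod q) (p := q) (n := 1)
      (by simpa using hq.one_lt.ne')
  rw [coe_mapRingHom, map_cyclotomic, hcyc] at hdvd'
  obtain ⟨R, hR⟩ := (pow_dvd_pow (X - 1 : (ZMod q)[X]) (show 3 ≤ q - 1 by omega)).trans hdvd'
  -- `(X d/dX) ^ 2` followed by evaluation at `1`
  have h2 := congrArg (fun Q => eval 1 (derivative (X * derivative Q))) hR
  have hpow : ∀ k : ℕ,
      eval 1 (derivative (X * derivative (X ^ k : (ZMod q)[X]))) = (k : ZMod q) ^ 2 := by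
    intro k
    rcases k with _ | k
    · simp
    · simp [derivative_X_pow]
      ring
  have hz : eval 1 (derivative (X * derivative ((X - 1) ^ 3 * R))) = 0 := by
    simp [derivative_mul, derivative_pow]
  simp only [hz, Polynomial.map_sub, Polynomial.map_sum, Polynomial.map_pow, map_X, map_sub,
    map_sum, mul_sub, Finset.mul_sum, eval_sub, eval_finsetSum, hpow, ZMod.natCast_zmod_val] at h2
  exact sub_eq_zero.mp h2

/-- With `a m = n ^ m - n ^ (-m)`, the terms `n ^ (2 * m)` and `n ^ (-2 * m)` of `a m ^ 2` run over
all `p`-th roots of unity and sum to zero, leaving only the constant term. -/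
lemma sum_sq_zpow_sub_zpow_neg {K : Type*} [Field K] {p : ℕ} (hp : p.Prime) (hpodd : Odd p)
    (n : Kˣ) (hn : orderOf n = p) :
    ∑ m ∈ Finset.range p, (((n ^ (m : ℤ) : Kˣ) : K) - ((n ^ (-(m : ℤ)) : Kˣ) : K)) ^ 2
      = -2 * (p : K) := by
  have hgeom : ∀ u : Kˣ, orderOf u = p → ∑ m ∈ Finset.range p, ((u : K) ^ 2) ^ m = 0 := by
    intro u hu
    have hne : (u : K) ^ 2 - 1 ≠ 0 := by
      intro h0
      have h1 : u ^ 2 = 1 := Units.ext (by simpa using sub_eq_zero.mp h0)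
      have h2 := Nat.le_of_dvd two_pos (hu ▸ orderOf_dvd_of_pow_eq_one h1)
      have h3 := hp.two_le
      obtain ⟨k, hk⟩ := hpodd
      omega
    have hup : (u : K) ^ p = 1 := by
      rw [← Units.val_pow_eq_pow_val, ← hu, pow_orderOf_eq_one, Units.val_one]
    have := geom_sum_mul ((u : K) ^ 2) p
    rw [← pow_mul, mul_comm 2, pow_mul, hup, one_pow, sub_self] at this
    exact (mul_eq_zero.mp this).resolve_right hne
  have hterm : ∀ m : ℕ, (((n ^ (m : ℤ) : Kˣ) : K) - ((n ^ (-(m : ℤ)) : Kˣ) : K)) ^ 2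
      = ((n : K) ^ 2) ^ m + (((n⁻¹ : Kˣ) : K) ^ 2) ^ m - 2 := by
    intro m
    have h1 : ((n : K)) ^ m * ((n⁻¹ : Kˣ) : K) ^ m = 1 := by
      rw [← mul_pow, Units.mul_inv, one_pow]
    rw [zpow_neg, zpow_natCast, ← inv_pow, Units.val_pow_eq_pow_val, Units.val_pow_eq_pow_val,
      pow_right_comm, pow_right_comm _ 2 m]
    linear_combination (-2) * h1
  simp only [hterm, Finset.sum_sub_distrib, Finset.sum_add_distrib, hgeom n hn,
    hgeom n⁻¹ (by rw [orderOf_inv, hn])]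
  simp [mul_comm]

lemma modEq_of_zpow_sub_zpow_neg_eq {K : Type*} [Field K] (h2 : (2 : K) ≠ 0) {p : ℕ}
    (hpodd : Odd p) (n : Kˣ) (hn : orderOf n = p) (s t : ℤ)
    (h : ((n ^ s : Kˣ) : K) - ((n ^ (-s) : Kˣ) : K) = ((n ^ t : Kˣ) : K) - ((n ^ (-t) : Kˣ) : K)) :
    s ≡ t [ZMOD p] := by
  have hinv : ∀ k : ℤ, ((n ^ k : Kˣ) : K) * ((n ^ (-k) : Kˣ) : K) = 1 := by
    intro k
    rw [← Units.val_mul, ← zpow_add, add_neg_cancel, zpow_zero, Units.val_one]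
  have hmul : (((n ^ s : Kˣ) : K) - ((n ^ t : Kˣ) : K)) *
      (1 + ((n ^ (-s) : Kˣ) : K) * ((n ^ (-t) : Kˣ) : K)) = 0 := by
    linear_combination h + ((n ^ (-t) : Kˣ) : K) * hinv s - ((n ^ (-s) : Kˣ) : K) * hinv t
  rcases mul_eq_zero.mp hmul with h0 | h0
  · rw [← hn]
    exact zpow_eq_zpow_iff_modEq.mp (Units.ext (sub_eq_zero.mp h0))
  · exfalso
    rw [← Units.val_mul, ← zpow_add] at h0
    set u := n ^ (-s + -t)
    have hu : u ^ p = 1 := by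
      rw [← zpow_natCast, zpow_comm, zpow_natCast, ← hn, pow_orderOf_eq_one, one_zpow]
    have hval : (u : K) = -1 := by linear_combination h0
    have := congrArg Units.val hu
    rw [Units.val_pow_eq_pow_val, hval, hpodd.neg_one_pow, Units.val_one] at this
    exact h2 (by linear_combination -this)


theorem stmt_0 (q p : ℕ) (hq : q.Prime) (hqodd : Odd q) (hp : p.Prime) (hpodd : Odd p)
    (n : (ZMod q)ˣ) (hn : orderOf n = p)
    (ζ : ℂ) (hζ : IsPrimitiveRoot ζ q)
    (t t' : ℤ) (ht : ¬ t ≡ 0 [ZMOD p]) (ht' : ¬ t' ≡ 0 [ZMOD p])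
    (hsum :
      ∑ m ∈ Finset.range p,
        ζ ^ ((((n ^ t : (ZMod q)ˣ) : ZMod q) - ((n ^ (-t) : (ZMod q)ˣ) : ZMod q)) *
              (((n ^ (m : ℤ) : (ZMod q)ˣ) : ZMod q) -
                ((n ^ (-(m : ℤ)) : (ZMod q)ˣ) : ZMod q))).val
      = ∑ m ∈ Finset.range p,
        ζ ^ ((((n ^ t' : (ZMod q)ˣ) : ZMod q) - ((n ^ (-t') : (ZMod q)ˣ) : ZMod q)) *
              (((n ^ (m : ℤ) : (ZMod q)ˣ) : ZMod q) -
                ((n ^ (-(m : ℤ)) : (ZMod q)ˣ) : ZMod q))).val) :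
    t ≡ t' [ZMOD p] ∨ t ≡ -t' [ZMOD p] := by
  have := Fact.mk hq
  have hpdvd : p ∣ q - 1 := by
    rw [← hn, ← Nat.totient_prime hq, ← ZMod.card_units_eq_totient]
    exact orderOf_dvd_card
  have hple : p ≤ q - 1 := Nat.le_of_dvd (by have := hq.two_le; omega) hpdvd
  have hp3 : 3 ≤ p := by
    have := hp.two_le
    obtain ⟨k, hk⟩ := hpodd
    omega
  have hsmall : ∀ k : ℕ, 0 < k → k < q → (k : ZMod q) ≠ 0 := by
    intro k hk hkq h0
    exact absurd (Nat.le_of_dvd hk ((ZMod.natCast_eq_zero_iff k q).mp h0)) (by omega)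
  have h2 : (2 : ZMod q) ≠ 0 := by exact_mod_cast hsmall 2 two_pos (by omega)
  have hp0 : (p : ZMod q) ≠ 0 := hsmall p hp.pos (by omega)
  have hsq := sum_sq_eq_of_sum_pow_val_eq hq (by omega) hζ _ _ _ hsum
  simp only [mul_pow _ _ 2] at hsq
  rw [← Finset.mul_sum, ← Finset.mul_sum, sum_sq_zpow_sub_zpow_neg hp hpodd n hn] at hsq
  have hS : (-2 * (p : ZMod q)) ≠ 0 := mul_ne_zero (neg_ne_zero.mpr h2) hp0
  rcases sq_eq_sq_iff_eq_or_eq_neg.mp (mul_right_cancel₀ hS hsq) with h | h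
  · exact Or.inl (modEq_of_zpow_sub_zpow_neg_eq h2 hpodd n hn t t' h)
  · refine Or.inr (modEq_of_zpow_sub_zpow_neg_eq h2 hpodd n hn t (-t') ?_)
    rw [h, neg_neg, neg_sub]
end

section
/- Let q and p be odd primes and let n be a unit of ℤ/qℤ whose multiplicative order is p. Let ζ ∈ ℂ be a primitive q-th root of unity and let t, t′ be integers. If Σ_{m=0}^{p−1} ζ^{((n^t − n^{−t})·(n^m − n^{−m})).val} = Σ_{m=0}^{p−1} ζ^{((n^{t′} − n^{−t′})·(n^m − n^{−m})).val}, then the two subsets of ℤ/qℤ given by {(n^t − n^{−t})·(n^m − n^{−m}) : 0 ≤ m ≤ p−1} and {(n^{t′} − n^{−t′})·(n^m − n^{−m}) : 0 ≤ m ≤ p−1} are equal. -/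
/-!
Let `f m` and `g m` be the exponents on the two sides. Collect both sums into the rational
polynomial `P = ∑ X ^ (f m).val - ∑ X ^ (g m).val`, which has degree less than `q`. The equality
of the sums says `P(ζ) = 0`, so the cyclotomic polynomial `Φ_q` divides `P`; both sums have `p`
terms, so `P(1) = 0` and `X - 1` divides `P`. As `Φ_q` and `X - 1` are coprime with product
`X ^ q - 1`, of degree `q`, this forces `P = 0`. Comparing coefficients, each residue occurs
equally often among the values of `f` and of `g`; in particular the two sets of values agree.
-/

open Polynomial in
/-- A rational polynomial of degree less than the prime `q` that vanishes both at `1` and at a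
primitive `q`-th root of unity is zero. -/
lemma eq_zero_of_aeval_zeta_of_eval_one {q : ℕ} (hq : q.Prime) {ζ : ℂ} (hζ : IsPrimitiveRoot ζ q)
    (P : ℚ[X]) (hdeg : P.degree < q) (h1 : P.eval 1 = 0) (hP : aeval ζ P = 0) : P = 0 := by
  have : Fact q.Prime := ⟨hq⟩
  have hd1 : cyclotomic q ℚ ∣ P := by
    rw [cyclotomic_eq_minpoly_rat hζ hq.pos]
    exact minpoly.dvd ℚ ζ hP
  have hd2 : cyclotomic 1 ℚ ∣ P := by
    rw [cyclotomic_one]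
    simpa using dvd_iff_isRoot.mpr h1
  have hd : cyclotomic q ℚ * cyclotomic 1 ℚ ∣ P :=
    (cyclotomic.isCoprime_rat hq.ne_one).mul_dvd hd1 hd2
  rw [cyclotomic_one, cyclotomic_prime_mul_X_sub_one] at hd
  refine eq_zero_of_dvd_of_degree_lt hd ?_
  rwa [← C_1, degree_X_pow_sub_C hq.pos]

open Polynomial in
/-- Two sums of powers of `ζ` over the same index set agree only if their exponents agree as
multisets modulo `q`. -/
lemma card_filter_eq_of_sum_zeta_pow_eq {q : ℕ} (hq : q.Prime) {ζ : ℂ} (hζ : IsPrimitiveRoot ζ q)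
    (s : Finset ℕ) (f g : ℕ → ZMod q)
    (h : ∑ m ∈ s, ζ ^ (f m).val = ∑ m ∈ s, ζ ^ (g m).val) (x : ZMod q) :
    (s.filter fun m => f m = x).card = (s.filter fun m => g m = x).card := by
  have : NeZero q := ⟨hq.ne_zero⟩
  have hdeg (f : ℕ → ZMod q) : (∑ m ∈ s, (X : ℚ[X]) ^ (f m).val).degree < q := by
    rw [← mem_degreeLT]
    refine Submodule.sum_mem _ fun m _ => ?_
    rw [mem_degreeLT, degree_X_pow]
    exact_mod_cast ZMod.val_lt (f m)
  have hcoeff (f : ℕ → ZMod q) : (∑ m ∈ s, (X : ℚ[X]) ^ (f m).val).coeff x.val =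
      (s.filter fun m => f m = x).card := by
    simp [coeff_X_pow, (ZMod.val_injective q).eq_iff, eq_comm]
  have hP := eq_zero_of_aeval_zeta_of_eval_one hq hζ
    (∑ m ∈ s, (X : ℚ[X]) ^ (f m).val - ∑ m ∈ s, (X : ℚ[X]) ^ (g m).val)
    ((degree_sub_le _ _).trans_lt (max_lt (hdeg f) (hdeg g)))
    (by simp [eval_finsetSum]) (by simp [h])
  have := congrArg (fun P : ℚ[X] => P.coeff x.val) (sub_eq_zero.mp hP)
  simp only [hcoeff] at this
  exact_mod_cast this


theorem stmt_1 (q p : ℕ) (hq : q.Prime) (hqodd : Odd q) (hp : p.Prime) (hpodd : Odd p)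
    (n : (ZMod q)ˣ) (hn : orderOf n = p)
    (ζ : ℂ) (hζ : IsPrimitiveRoot ζ q)
    (t t' : ℤ)
    (hsum :
      ∑ m ∈ Finset.range p,
        ζ ^ ((((n ^ t : (ZMod q)ˣ) : ZMod q) - ((n ^ (-t) : (ZMod q)ˣ) : ZMod q)) *
              (((n ^ (m : ℤ) : (ZMod q)ˣ) : ZMod q) -
                ((n ^ (-(m : ℤ)) : (ZMod q)ˣ) : ZMod q))).val
      = ∑ m ∈ Finset.range p,
        ζ ^ ((((n ^ t' : (ZMod q)ˣ) : ZMod q) - ((n ^ (-t') : (ZMod q)ˣ) : ZMod q)) *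
              (((n ^ (m : ℤ) : (ZMod q)ˣ) : ZMod q) -
                ((n ^ (-(m : ℤ)) : (ZMod q)ˣ) : ZMod q))).val) :
    {x : ZMod q | ∃ m : ℕ, m ≤ p - 1 ∧
        x = (((n ^ t : (ZMod q)ˣ) : ZMod q) - ((n ^ (-t) : (ZMod q)ˣ) : ZMod q)) *
              (((n ^ (m : ℤ) : (ZMod q)ˣ) : ZMod q) -
                ((n ^ (-(m : ℤ)) : (ZMod q)ˣ) : ZMod q))}
      = {x : ZMod q | ∃ m : ℕ, m ≤ p - 1 ∧
        x = (((n ^ t' : (ZMod q)ˣ) : ZMod q) - ((n ^ (-t') : (ZMod q)ˣ) : ZMod q)) *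
              (((n ^ (m : ℤ) : (ZMod q)ˣ) : ZMod q) -
                ((n ^ (-(m : ℤ)) : (ZMod q)ˣ) : ZMod q))} := by
  have key := card_filter_eq_of_sum_zeta_pow_eq hq hζ (Finset.range p) _ _ hsum
  ext x
  have hiff := Finset.card_pos.symm.trans ((iff_of_eq (congrArg (0 < ·) (key x))).trans
    Finset.card_pos)
  have hlt (m : ℕ) : m ≤ p - 1 ↔ m < p := Nat.le_sub_one_iff_lt hp.pos
  simp only [Finset.filter_nonempty_iff, Finset.mem_range] at hiff
  simpa only [Set.mem_ofPred_eq, hlt, eq_comm (a := x)] using hiff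
end

section
/- Let q be a prime, let n be a unit of ℤ/qℤ, let p be a positive integer with n^p = 1, and let c be an integer. Set ζ = exp(2πi·c/q) ∈ ℂ. Then for all integers k and t with k ≡ 2t (mod p): Σ_{m=0}^{p−1} ζ^{(n^m·(1 − n^k) + n^{−m}·(1 − n^{−k})).val} = Σ_{m=0}^{p−1} ζ^{((n^{−t} − n^t)·(n^m − n^{−m})).val}. -/
/-!
Both sides are sums over a full period of functions of `m` that are `p`-periodic on `ℤ`, because
`n ^ p = 1`. Since `n ^ k = n ^ (2 * t)`, the exponent on the left at `m` is
`n ^ m - n ^ (m + 2t) + n ^ (-m) - n ^ (-m - 2t)`, which factors as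
`(n ^ (-t) - n ^ t) * (n ^ (m + t) - n ^ (-(m + t)))`: the exponent on the right at `m + t`.
So the two sums differ by the translation `m ↦ m + t`, under which a sum over a full period is
invariant (`sum_range_add_of_periodic`).
-/

theorem sum_range_add_of_periodic {M : Type*} [AddCommMonoid M] [IsRightCancelAdd M]
    (f : ℤ → M) (p : ℕ) (hf : Function.Periodic f p) (s : ℤ) :
    ∑ m ∈ Finset.range p, f (m + s) = ∑ m ∈ Finset.range p, f m := by
  -- The sum is invariant under translation by `1`, hence under every integer translation.
  have h : Function.Periodic (fun s : ℤ => ∑ m ∈ Finset.range p, f (m + s)) 1 := by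
    intro s
    have h1 := Finset.sum_range_succ (fun m : ℕ => f (m + s)) p
    rw [Finset.sum_range_succ', add_comm (p : ℤ) s, hf s] at h1
    simp only [Nat.cast_zero, zero_add] at h1
    refine Eq.trans ?_ (add_right_cancel h1)
    refine Finset.sum_congr rfl fun m _ => congrArg f ?_
    push_cast
    ring
  simpa using h.int_mul_eq s

theorem zpow_exponent_factor {R : Type*} [CommRing R] (n : Rˣ) (m t : ℤ) :
    ((n ^ m : Rˣ) : R) * (1 - ((n ^ (2 * t) : Rˣ) : R))
        + ((n ^ (-m) : Rˣ) : R) * (1 - ((n ^ (-(2 * t)) : Rˣ) : R))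
      = (((n ^ (-t) : Rˣ) : R) - ((n ^ t : Rˣ) : R)) *
          (((n ^ (m + t) : Rˣ) : R) - ((n ^ (-(m + t)) : Rˣ) : R)) := by
  simp only [mul_sub, sub_mul, mul_one, ← Units.val_mul, ← zpow_add]
  ring_nf


open Complex in
theorem stmt_2 (q : ℕ) (hq : q.Prime) (n : (ZMod q)ˣ) (p : ℕ) (hp : 0 < p)
    (hnp : n ^ p = 1) (c : ℤ)
    (ζ : ℂ) (hζ : ζ = Complex.exp (2 * Real.pi * Complex.I * c / q)) :
    ∀ k t : ℤ, k ≡ 2 * t [ZMOD p] →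
      ∑ m ∈ Finset.range p,
        ζ ^ (((n ^ (m : ℤ) : (ZMod q)ˣ) : ZMod q) * (1 - ((n ^ k : (ZMod q)ˣ) : ZMod q))
              + ((n ^ (-(m : ℤ)) : (ZMod q)ˣ) : ZMod q) *
                (1 - ((n ^ (-k) : (ZMod q)ˣ) : ZMod q))).val
      = ∑ m ∈ Finset.range p,
        ζ ^ ((((n ^ (-t) : (ZMod q)ˣ) : ZMod q) - ((n ^ t : (ZMod q)ˣ) : ZMod q)) *
              (((n ^ (m : ℤ) : (ZMod q)ˣ) : ZMod q) -
                ((n ^ (-(m : ℤ)) : (ZMod q)ˣ) : ZMod q))).val := by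
  intro k t hkt
  have hk : n ^ k = n ^ (2 * t) :=
    zpow_eq_zpow_iff_modEq.2
      (hkt.of_dvd (Int.natCast_dvd_natCast.2 (orderOf_dvd_of_pow_eq_one hnp)))
  rw [zpow_neg n k, hk, ← zpow_neg]
  simp only [zpow_exponent_factor]
  refine sum_range_add_of_periodic (fun m : ℤ => ζ ^ ((((n ^ (-t) : (ZMod q)ˣ) : ZMod q) -
    ((n ^ t : (ZMod q)ˣ) : ZMod q)) * (((n ^ m : (ZMod q)ˣ) : ZMod q) -
      ((n ^ (-m) : (ZMod q)ˣ) : ZMod q))).val) p (fun m => ?_) t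
  have hm : n ^ (m + p) = n ^ m := by rw [zpow_add, zpow_natCast, hnp, mul_one]
  simp only [zpow_neg, hm]
end

section
/- Let q be an odd prime and let n be a unit of ℤ/qℤ whose multiplicative order is odd. Then for all integers m and j: if n^m − n^{−m} = n^j − n^{−j} in ℤ/qℤ, then n^m = n^j. In particular, the p elements n^m − n^{−m} of ℤ/qℤ for m = 0, …, p−1 are pairwise distinct when n has odd order p. -/
/-!
With `a = n ^ m` and `b = n ^ j`, the equation `a - a⁻¹ = b - b⁻¹` multiplied by `a * b` becomes
`(a - b) * (a * b + 1) = 0` in the field `ZMod q`. The second factor cannot vanish: `a * b` is a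
power of `n`, so its `orderOf n`-th power is `1`, while `(-1) ^ orderOf n = -1 ≠ 1` because
`orderOf n` and `q` are odd. Injectivity on `range (orderOf n)` then follows because powers of `n`
with exponents below the order are distinct.
-/


theorem stmt_3 (q : ℕ) (hq : q.Prime) (hqodd : Odd q)
    (n : (ZMod q)ˣ) (hodd : Odd (orderOf n)) :
    (∀ m j : ℤ,
      ((n ^ m : (ZMod q)ˣ) : ZMod q) - ((n ^ (-m) : (ZMod q)ˣ) : ZMod q)
        = ((n ^ j : (ZMod q)ˣ) : ZMod q) - ((n ^ (-j) : (ZMod q)ˣ) : ZMod q) →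
      ((n ^ m : (ZMod q)ˣ) : ZMod q) = ((n ^ j : (ZMod q)ˣ) : ZMod q)) ∧
    Set.InjOn
      (fun m : ℕ =>
        ((n ^ (m : ℤ) : (ZMod q)ˣ) : ZMod q) - ((n ^ (-(m : ℤ)) : (ZMod q)ˣ) : ZMod q))
      (Finset.range (orderOf n)) := by
  have : Fact q.Prime := ⟨hq⟩
  have : Fact (2 < q) := ⟨by
    have := hq.two_le
    obtain ⟨k, hk⟩ := hqodd
    omega⟩
  have key : ∀ m j : ℤ,
      ((n ^ m : (ZMod q)ˣ) : ZMod q) - ((n ^ (-m) : (ZMod q)ˣ) : ZMod q)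
        = ((n ^ j : (ZMod q)ˣ) : ZMod q) - ((n ^ (-j) : (ZMod q)ˣ) : ZMod q) →
      ((n ^ m : (ZMod q)ˣ) : ZMod q) = ((n ^ j : (ZMod q)ˣ) : ZMod q) := by
    intro m j h
    have hpow : (n ^ m * n ^ j) ^ orderOf n = 1 := by
      rw [← zpow_add, ← zpow_natCast, zpow_comm, zpow_natCast, pow_orderOf_eq_one, one_zpow]
    rw [zpow_neg, zpow_neg] at h
    generalize n ^ m = a at *
    generalize n ^ j = b at *
    have ha : (a : ZMod q) * ((a⁻¹ : (ZMod q)ˣ) : ZMod q) = 1 := a.mul_inv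
    have hb : (b : ZMod q) * ((b⁻¹ : (ZMod q)ˣ) : ZMod q) = 1 := b.mul_inv
    have hfac : ((a : ZMod q) - b) * (a * b + 1) = 0 := by
      linear_combination (a : ZMod q) * b * h + (b : ZMod q) * ha - (a : ZMod q) * hb
    rcases mul_eq_zero.mp hfac with h1 | h1
    · exact sub_eq_zero.mp h1
    · exfalso
      have h2 : (a : ZMod q) * b = -1 := eq_neg_of_add_eq_zero_left h1
      have h3 : ((a : ZMod q) * b) ^ orderOf n = 1 := by
        simpa using congrArg Units.val hpow
      rw [h2, hodd.neg_one_pow] at h3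
      exact ZMod.neg_one_ne_one h3
  refine ⟨key, fun x hx y hy hxy => ?_⟩
  have h := Units.ext (key x y hxy)
  rw [zpow_natCast, zpow_natCast] at h
  exact pow_injOn_Iio_orderOf (by simpa using hx) (by simpa using hy) h
end

section
/- Let q be a prime, let p be an odd prime, and let n be a unit of ℤ/qℤ whose multiplicative order is p. Then for every integer t, the following identity holds in ℤ/qℤ: Σ_{m=0}^{p−1} ((n^t − n^{−t})·(n^m − n^{−m}))² = −2·p·(n^t − n^{−t})². -/
/-!
Write `u` for `n` viewed in the field `ℤ/qℤ`. Expanding the square, the `m`-th factor is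
`(u ^ 2) ^ m + (u⁻¹ ^ 2) ^ m - 2`. Since `p` is an odd prime, `u ^ 2` and `u⁻¹ ^ 2` are `p`-th
roots of unity different from `1`, so the geometric sums of their powers vanish, leaving
`-2 * p` times the common factor.
-/

/-- The geometric sum of the powers of a nontrivial `p`-th root of unity vanishes. -/
lemma sum_pow_eq_zero_of_root {K : Type*} [Field K] {p : ℕ} {x : K} (hx : x ^ p = 1)
    (h1 : x ≠ 1) : ∑ m ∈ Finset.range p, x ^ m = 0 := by
  rw [geom_sum_eq h1, hx, sub_self, zero_div]

theorem stmt_4 (q p : ℕ) (hq : q.Prime) (hp : p.Prime) (hpodd : Odd p)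
    (n : (ZMod q)ˣ) (hn : orderOf n = p) :
    ∀ t : ℤ,
      ∑ m ∈ Finset.range p,
        ((((n ^ t : (ZMod q)ˣ) : ZMod q) - ((n ^ (-t) : (ZMod q)ˣ) : ZMod q)) *
          (((n ^ (m : ℤ) : (ZMod q)ˣ) : ZMod q) -
            ((n ^ (-(m : ℤ)) : (ZMod q)ˣ) : ZMod q))) ^ 2
      = -2 * (p : ZMod q) *
          (((n ^ t : (ZMod q)ˣ) : ZMod q) - ((n ^ (-t) : (ZMod q)ˣ) : ZMod q)) ^ 2 := by
  intro t
  haveI : Fact q.Prime := ⟨hq⟩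
  have hnp : n ^ p = 1 := hn ▸ pow_orderOf_eq_one n
  have hsq : n ^ 2 ≠ 1 := by
    intro h
    have hd : p ∣ 2 := hn ▸ orderOf_dvd_of_pow_eq_one h
    have h2 : p = 2 := (Nat.prime_dvd_prime_iff_eq hp Nat.prime_two).1 hd
    subst h2
    exact absurd hpodd (by decide)
  have key : ∀ v : (ZMod q)ˣ, v ^ p = 1 → v ^ 2 ≠ 1 →
      ∑ m ∈ Finset.range p, ((v : ZMod q) ^ 2) ^ m = 0 := by
    intro v hv hv2
    apply sum_pow_eq_zero_of_root
    · rw [← pow_mul, mul_comm, pow_mul, ← Units.val_pow_eq_pow_val, hv]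
      simp
    · rw [← Units.val_pow_eq_pow_val]
      exact fun h => hv2 (Units.ext h)
  have h1 := key n hnp hsq
  have h2 := key n⁻¹ (by simp [hnp]) (by simpa using hsq)
  generalize ((n ^ t : (ZMod q)ˣ) : ZMod q) - ((n ^ (-t) : (ZMod q)ˣ) : ZMod q) = c
  have hterm : ∀ m ∈ Finset.range p,
      (c * (((n ^ (m : ℤ) : (ZMod q)ˣ) : ZMod q) -
        ((n ^ (-(m : ℤ)) : (ZMod q)ˣ) : ZMod q))) ^ 2
      = c ^ 2 * (((n : ZMod q) ^ 2) ^ m + (((n⁻¹ : (ZMod q)ˣ) : ZMod q) ^ 2) ^ m - 2) := by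
    intro m _
    have hm : (n : ZMod q) ^ m * ((n⁻¹ : (ZMod q)ˣ) : ZMod q) ^ m = 1 := by
      rw [← mul_pow, Units.mul_inv, one_pow]
    rw [zpow_neg, ← inv_zpow, zpow_natCast, zpow_natCast, Units.val_pow_eq_pow_val,
      Units.val_pow_eq_pow_val, pow_right_comm (n : ZMod q) 2 m,
      pow_right_comm ((n⁻¹ : (ZMod q)ˣ) : ZMod q) 2 m]
    linear_combination (-2 * c ^ 2) * hm
  rw [Finset.sum_congr rfl hterm, ← Finset.mul_sum, Finset.sum_sub_distrib,
    Finset.sum_add_distrib, h1, h2, Finset.sum_const, Finset.card_range, nsmul_eq_mul]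
  ring
end

section
/- Let q be an odd prime, let p be an odd prime, and let n be a unit of ℤ/qℤ whose multiplicative order is p. Let t, t′ be integers such that (n^t − n^{−t})² = (n^{t′} − n^{−t′})² in ℤ/qℤ. Then t ≡ t′ (mod p) or t ≡ −t′ (mod p). -/
/-!
Write `a = n ^ t` and `b = n ^ t'`. Expanding the squares, the hypothesis says
`a² + a⁻² = b² + b⁻²`, and multiplying by `a² b²` turns this into
`(a² - b²) (a² b² - 1) = 0`. As `ZMod q` is a field, `n ^ (2t) = n ^ (2t')` or
`n ^ (2t) = n ^ (-2t')`; the exponents then agree modulo the order `p` of `n`, and `2` may be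
cancelled because `p` is odd.
-/

/-- Squaring is injective on the powers of an element of odd order. -/
lemma modEq_of_zpow_sq_eq {G : Type*} [Group G] {n : G} {p : ℕ} (hpodd : Odd p)
    (hn : orderOf n = p) {s s' : ℤ} (h : (n ^ s) ^ 2 = (n ^ s') ^ 2) : s ≡ s' [ZMOD p] := by
  have h2 : n ^ (s * 2) = n ^ (s' * 2) := by
    rw [zpow_mul, zpow_mul]
    exact_mod_cast h
  rw [zpow_eq_zpow_iff_modEq, hn, Int.modEq_iff_dvd, ← sub_mul] at h2
  have hc : IsCoprime (p : ℤ) 2 := by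
    exact_mod_cast Nat.isCoprime_iff_coprime.mpr hpodd.coprime_two_right
  exact Int.modEq_iff_dvd.mpr (hc.dvd_of_dvd_mul_right h2)

theorem stmt_5 (q p : ℕ) (hq : q.Prime) (hqodd : Odd q) (hp : p.Prime) (hpodd : Odd p)
    (n : (ZMod q)ˣ) (hn : orderOf n = p) (t t' : ℤ)
    (h : (((n ^ t : (ZMod q)ˣ) : ZMod q) - ((n ^ (-t) : (ZMod q)ˣ) : ZMod q)) ^ 2
        = (((n ^ t' : (ZMod q)ˣ) : ZMod q) - ((n ^ (-t') : (ZMod q)ˣ) : ZMod q)) ^ 2) :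
    t ≡ t' [ZMOD p] ∨ t ≡ -t' [ZMOD p] := by
  have : Fact q.Prime := ⟨hq⟩
  suffices hs : (n ^ t) ^ 2 = (n ^ t') ^ 2 ∨ (n ^ t) ^ 2 = (n ^ (-t')) ^ 2 from
    hs.imp (modEq_of_zpow_sq_eq hpodd hn) (modEq_of_zpow_sq_eq hpodd hn)
  rw [zpow_neg, zpow_neg] at h
  rw [zpow_neg]
  generalize n ^ t = a at h ⊢
  generalize n ^ t' = b at h ⊢
  have ha : (a : ZMod q) * ((a⁻¹ : (ZMod q)ˣ) : ZMod q) = 1 := a.mul_inv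
  have hb : (b : ZMod q) * ((b⁻¹ : (ZMod q)ˣ) : ZMod q) = 1 := b.mul_inv
  have key : ((a : ZMod q) ^ 2 - (b : ZMod q) ^ 2) * ((a : ZMod q) ^ 2 * (b : ZMod q) ^ 2 - 1) = 0 := by
    grind
  rcases mul_eq_zero.mp key with h1 | h1
  · left
    ext
    push_cast
    exact sub_eq_zero.mp h1
  · right
    rw [inv_pow, eq_inv_iff_mul_eq_one]
    ext
    push_cast
    exact sub_eq_zero.mp h1
end

section
/- Let q be an odd prime, let p be an odd prime, and let n be a unit of ℤ/qℤ whose multiplicative order is p. Let t be an integer with t ≢ 0 (mod p). Then the set {(n^t − n^{−t})·(n^m − n^{−m}) : 0 ≤ m ≤ p−1} ⊆ ℤ/qℤ has exactly p elements. -/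
/-!
For units `a`, `b` of a field, `a - a⁻¹ = b - b⁻¹` factors as `(a - b) * (a * b + 1) = 0`. If `a`
and `b` are both `p`-torsion with `p` odd, then `a * b = -1` would give `1 = (a * b) ^ p = -1`,
which is impossible when `2 ≠ 0`. So `a ↦ a - a⁻¹` is injective on `p`-torsion units. Applied to
`n ^ t` and `1`, this makes the factor `n ^ t - n ^ (-t)` nonzero; applied to the powers `n ^ m`,
which are distinct for `m < orderOf n`, it makes the `p` listed elements distinct.
-/

theorem eq_of_sub_inv_eq {K : Type*} [Field K] (h2 : (2 : K) ≠ 0) {p : ℕ} (hp : Odd p)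
    {a b : Kˣ} (ha : a ^ p = 1) (hb : b ^ p = 1)
    (h : (a : K) - ((a⁻¹ : Kˣ) : K) = (b : K) - ((b⁻¹ : Kˣ) : K)) : a = b := by
  have key : ((a : K) - b) * ((a : K) * b + 1) = 0 := by
    have e1 := a.mul_inv
    have e2 := b.mul_inv
    linear_combination (a : K) * b * h + (b : K) * e1 - (a : K) * e2
  rcases mul_eq_zero.mp key with h0 | h0
  · exact Units.ext (sub_eq_zero.mp h0)
  · exfalso
    have hab : (a : K) * b = -1 := eq_neg_of_add_eq_zero_left h0
    have h1 : ((a : K) * b) ^ p = 1 := by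
      rw [mul_pow, ← Units.val_pow_eq_pow_val, ← Units.val_pow_eq_pow_val, ha, hb]
      simp
    rw [hab, hp.neg_one_pow] at h1
    exact h2 (by linear_combination -h1)

theorem stmt_7 (q p : ℕ) (hq : q.Prime) (hqodd : Odd q) (hp : p.Prime) (hpodd : Odd p)
    (n : (ZMod q)ˣ) (hn : orderOf n = p) (t : ℤ) (ht : ¬ t ≡ 0 [ZMOD p]) :
    ((Finset.range p).image (fun m : ℕ =>
        (((n ^ t : (ZMod q)ˣ) : ZMod q) - ((n ^ (-t) : (ZMod q)ˣ) : ZMod q)) *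
          (((n ^ (m : ℤ) : (ZMod q)ˣ) : ZMod q) -
            ((n ^ (-(m : ℤ)) : (ZMod q)ˣ) : ZMod q)))).card = p := by
  haveI : Fact q.Prime := ⟨hq⟩
  have h2 : (2 : ZMod q) ≠ 0 := by
    intro h
    have hdvd : q ∣ 2 := (ZMod.natCast_eq_zero_iff 2 q).mp (by exact_mod_cast h)
    rw [(Nat.prime_dvd_prime_iff_eq hq Nat.prime_two).mp hdvd] at hqodd
    exact absurd hqodd (by decide)
  have hnp : n ^ p = 1 := hn ▸ pow_orderOf_eq_one n
  have htors : ∀ k : ℤ, (n ^ k) ^ p = 1 := fun k => by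
    rw [← zpow_natCast, zpow_comm, zpow_natCast, hnp, one_zpow]
  have hfac : ((n ^ t : (ZMod q)ˣ) : ZMod q) - ((n ^ (-t) : (ZMod q)ˣ) : ZMod q) ≠ 0 := by
    intro h
    rw [zpow_neg] at h
    have h1 : n ^ t = 1 :=
      eq_of_sub_inv_eq h2 hpodd (htors t) (one_pow p) (by rw [h]; simp)
    apply ht
    rw [Int.modEq_zero_iff_dvd, ← hn]
    exact orderOf_dvd_iff_zpow_eq_one.mpr h1
  rw [Finset.card_image_of_injOn, Finset.card_range]
  intro i hi j hj hij
  have hij' := mul_left_cancel₀ hfac hij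
  simp only [zpow_neg] at hij'
  have h := eq_of_sub_inv_eq h2 hpodd (htors i) (htors j) hij'
  rw [zpow_natCast, zpow_natCast] at h
  rw [Finset.coe_range, ← hn] at hi hj
  exact pow_injOn_Iio_orderOf hi hj h
end

section
/- Let G be a group and let ω : G × G × G → ℂˣ be a normalized 3-cocycle. Define α_g(x,y) := ω(x,y,g) · ω(x, y·g·y⁻¹, y)⁻¹ · ω((x·y)·g·(x·y)⁻¹, x, y) for g,x,y ∈ G. Then for all g,x,y,z ∈ G: α_g(y,z) · α_g(x, y·z) = α_{z·g·z⁻¹}(x,y) · α_g(x·y, z). -/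
/-!
Write `h = z g z⁻¹`, `k = y h y⁻¹`, `l = x k x⁻¹` for the successive conjugates of `g`, so that
`h z = z g`, `k y = y h` and `l x = x k`. Moving the conjugated element through `x, y, z` one
letter at a time gives the four instances of the cocycle identity at `(x, y, z, g)`,
`(x, y, h, z)`, `(x, k, y, z)` and `(l, x, y, z)`. In their alternating product the factors
`ω x y z`, `ω x y (z g)`, `ω x (y h) z` and `ω (x k) y z` cancel, and what remains is the claim.
-/

theorem stmt_10 {G : Type*} [Group G] (ω : G → G → G → ℂˣ)
    (hcocycle : ∀ x y z w : G,
      ω y z w * ω x (y * z) w * ω x y z = ω (x * y) z w * ω x y (z * w))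
    (hnormalized : ∀ x y z : G, x = 1 ∨ y = 1 ∨ z = 1 → ω x y z = 1)
    (α : G → G → G → ℂˣ)
    (hα : ∀ g x y : G,
      α g x y = ω x y g * (ω x (y * g * y⁻¹) y)⁻¹ * ω ((x * y) * g * (x * y)⁻¹) x y) :
    ∀ g x y z : G,
      α g y z * α g x (y * z) = α (z * g * z⁻¹) x y * α g (x * y) z := by
  intro g x y z
  obtain ⟨h, hh⟩ : ∃ h, h = z * g * z⁻¹ := ⟨_, rfl⟩
  obtain ⟨k, hk⟩ : ∃ k, k = y * h * y⁻¹ := ⟨_, rfl⟩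
  obtain ⟨l, hl⟩ : ∃ l, l = x * k * x⁻¹ := ⟨_, rfl⟩
  have hz : h * z = z * g := by rw [hh]; group
  have hy : k * y = y * h := by rw [hk]; group
  have hx : l * x = x * k := by rw [hl]; group
  have k_eq : (y * z) * g * (y * z)⁻¹ = k := by rw [hk, hh]; group
  have l_eq : (x * y) * h * (x * y)⁻¹ = l := by rw [hl, hk]; group
  have l_eq_2 : (x * (y * z)) * g * (x * (y * z))⁻¹ = l := by rw [hl, hk, hh]; group
  have l_eq_3 : (x * y * z) * g * (x * y * z)⁻¹ = l := by rw [hl, hk, hh]; group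
  have c₁ := congrArg Additive.ofMul (hcocycle x y z g)
  have c₂ := congrArg Additive.ofMul (hcocycle x y h z)
  have c₃ := congrArg Additive.ofMul (hcocycle x k y z)
  have c₄ := congrArg Additive.ofMul (hcocycle l x y z)
  rw [hz] at c₂
  rw [hy] at c₃
  rw [hx] at c₄
  simp only [hα, ← hh, ← hk, k_eq, l_eq, l_eq_2, l_eq_3]
  -- In additive notation the alternating product is a ℤ-linear combination.
  apply Additive.ofMul.injective
  simp only [ofMul_mul, ofMul_inv] at c₁ c₂ c₃ c₄ ⊢
  linear_combination (norm := abel) c₁ - c₂ + c₃ - c₄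
end

section
/- Let G be a group, let ω : G × G × G → ℂˣ be a normalized 3-cocycle, and let g ∈ G. Define α_g(x,y) := ω(x,y,g) · ω(x, y·g·y⁻¹, y)⁻¹ · ω((x·y)·g·(x·y)⁻¹, x, y). Then the restriction of α_g to the centralizer C_G(g) is a 2-cocycle: for all x,y,z ∈ C_G(g), α_g(y,z) · α_g(x, y·z) = α_g(x,y) · α_g(x·y, z). -/
/-! On the centralizer of `g` every conjugate of `g` occurring in `α g` equals `g`, so there
`α g x y = ω x y g * (ω x g y)⁻¹ * ω g x y`: the alternating product of `ω` over the ways of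
inserting `g` into `(x, y)` (the slant product of `ω` with `g`). Its coboundary at `(x, y, z)` is
the alternating product of the 3-cocycle identities at `(x, y, z, g)`, `(x, y, g, z)`,
`(x, g, y, z)` and `(g, x, y, z)`; the terms in which `g` is multiplied with `x`, `y` or `z`
cancel in pairs because `g` commutes with each of them. -/

theorem stmt_11 {G : Type*} [Group G] (ω : G → G → G → ℂˣ)
    (hcocycle : ∀ x y z w : G,
      ω y z w * ω x (y * z) w * ω x y z = ω (x * y) z w * ω x y (z * w))
    (hnormalized : ∀ x y z : G, x = 1 ∨ y = 1 ∨ z = 1 → ω x y z = 1)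
    (g : G) (α : G → G → G → ℂˣ)
    (hα : ∀ g x y : G,
      α g x y = ω x y g * (ω x (y * g * y⁻¹) y)⁻¹ * ω ((x * y) * g * (x * y)⁻¹) x y) :
    ∀ x y z : G, x ∈ Subgroup.centralizer {g} → y ∈ Subgroup.centralizer {g} →
      z ∈ Subgroup.centralizer {g} →
      α g y z * α g x (y * z) = α g x y * α g (x * y) z := by
  intro x y z hx hy hz
  rw [Subgroup.mem_centralizer_singleton_iff] at hx hy hz
  have conj : ∀ u : G, u * g = g * u → u * g * u⁻¹ = g := fun u hu => by
    rw [hu, mul_inv_cancel_right]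
  have hxy : x * y * g = g * (x * y) := by rw [mul_assoc, hy, ← mul_assoc, hx, mul_assoc]
  have hyz : y * z * g = g * (y * z) := by rw [mul_assoc, hz, ← mul_assoc, hy, mul_assoc]
  have hxyz : x * (y * z) * g = g * (x * (y * z)) := by
    rw [mul_assoc, hyz, ← mul_assoc, hx, mul_assoc]
  have h₁ := hcocycle x y z g
  have h₂ := hcocycle x y g z
  have h₃ := hcocycle x g y z
  have h₄ := hcocycle g x y z
  rw [hz] at h₁
  rw [hy] at h₂
  rw [hx] at h₃
  simp only [hα, mul_assoc x y z, conj _ hy, conj _ hz, conj _ hyz, conj _ hxy, conj _ hxyz]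
  -- In additive notation the goal is the alternating sum of the four cocycle identities.
  apply_fun Additive.ofMul at h₁ h₂ h₃ h₄ ⊢
  · simp only [ofMul_mul, ofMul_inv] at h₁ h₂ h₃ h₄ ⊢
    linear_combination (norm := abel) h₁ - h₂ + h₃ - h₄
end

section
/- Let G be a group and let ω : G × G × G → ℂˣ be a normalized 3-cocycle. Define α_g(x,y) := ω(x,y,g) · ω(x, y·g·y⁻¹, y)⁻¹ · ω((x·y)·g·(x·y)⁻¹, x, y). Then for all f, g ∈ G: α_g(f⁻¹, f) = α_{f·g·f⁻¹}(f, f⁻¹). -/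
/-!
The function `α` is a twisted 2-cocycle,
`α_{z g z⁻¹}(x, y) · α_g(x y, z) = α_g(x, y z) · α_g(y, z)`,
and the claim is the case `(x, y, z) = (f, f⁻¹, f)`, where normalization makes the two terms with
an argument `1` trivial. The twisted identity comes from the 3-cocycle identity with a
conjugate of `g` inserted in each of the four positions of `(x, y, z)`; the proof uses those four instances
directly for this triple.
-/

theorem stmt_12 {G : Type*} [Group G] (ω : G → G → G → ℂˣ)
    (hcocycle : ∀ x y z w : G,
      ω y z w * ω x (y * z) w * ω x y z = ω (x * y) z w * ω x y (z * w))
    (hnormalized : ∀ x y z : G, x = 1 ∨ y = 1 ∨ z = 1 → ω x y z = 1)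
    (α : G → G → G → ℂˣ)
    (hα : ∀ g x y : G,
      α g x y = ω x y g * (ω x (y * g * y⁻¹) y)⁻¹ * ω ((x * y) * g * (x * y)⁻¹) x y) :
    ∀ f g : G, α g f⁻¹ f = α (f * g * f⁻¹) f f⁻¹ := by
  intro f g
  have n (x y : G) : ω 1 x y = 1 ∧ ω x 1 y = 1 ∧ ω x y 1 = 1 :=
    ⟨hnormalized _ _ _ (by simp), hnormalized _ _ _ (by simp), hnormalized _ _ _ (by simp)⟩
  have h1 := hcocycle f f⁻¹ f g
  have h2 := hcocycle f f⁻¹ (f * g * f⁻¹) f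
  have h3 := hcocycle f g f⁻¹ f
  have h4 := hcocycle (f * g * f⁻¹) f f⁻¹ f
  have e : f⁻¹ * (f * g * f⁻¹) = g * f⁻¹ := by group
  simp only [e, inv_mul_cancel, mul_inv_cancel, inv_mul_cancel_right, n, mul_one, one_mul]
    at h1 h2 h3 h4
  have e' : f⁻¹ * (f * g * f⁻¹) * f = g := by group
  simp only [hα, inv_inv, e', inv_mul_cancel, mul_inv_cancel, inv_one, mul_one, one_mul]
  -- Pairing the instances with equal right-hand sides leaves two relations, whose product,
  -- after cancelling `ω f f⁻¹ f` and `ω f (g * f⁻¹) f`, is the claim.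
  have h12 := h1.trans h2.symm
  have h34 := h3.trans h4.symm
  have key : ω f⁻¹ f g * ω g f⁻¹ f * ω f g f⁻¹ =
      ω f⁻¹ (f * g * f⁻¹) f * ω f f⁻¹ (f * g * f⁻¹) * ω (f * g * f⁻¹) f f⁻¹ := by
    apply mul_right_cancel (b := ω f f⁻¹ f * ω f (g * f⁻¹) f)
    have h := congrArg₂ (· * ·) h12 h34
    simp only [mul_comm, mul_left_comm, mul_assoc] at h ⊢
    exact h
  rw [mul_right_comm, mul_right_comm (ω f f⁻¹ _), mul_inv_eq_iff_eq_mul,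
    mul_right_comm _ (ω f g f⁻¹)⁻¹, eq_mul_inv_iff_mul_eq, key]
  ac_rfl
end
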